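/- arXiv:2605.25612 — 4 statements merged into one kernel-verified Lean document; each statement's English description precedes it below -/
import Mathlib

section
/- Let σ : ℝ → ℝ be continuous at a point p ∈ ℝ and not differentiable at p, and let g : ℝ → ℝ be differentiable at σ(p). If the composition g ∘ σ is differentiable at p, then the derivative of g at σ(p) equals 0. -/
/-- If `σ` is continuous but not differentiable at `p`, `g` is differentiable
at `σ p`, and `g ∘ σ` is differentiable at `p`, then `deriv g (σ p) = 0`. -/
theorem stmt1 (σ g : ℝ → ℝ) (p : ℝ)
    (hcont : ContinuousAt σ p)
    (hnd : ¬ DifferentiableAt ℝ σ p)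
    (hg : DifferentiableAt ℝ g (σ p))
    (hcomp : DifferentiableAt ℝ (g ∘ σ) p) :
    deriv g (σ p) = 0 := by
  by_contra h0
  exact hnd (HasDerivAt.of_comp_left hcont hg.hasDerivAt hcomp.hasDerivAt h0 (Filter.Eventually.of_forall fun _ => rfl)).differentiableAt
end

section
/- Let N ≥ 1 and for each i ∈ [N] let f_i : ℝ^p → ℝ be twice continuously differentiable with f_i(θ) > 0 at a point θ, and set ℓ_i = −log f_i. Then the trace of the Hessian of the empirical loss L := (1/N) ∑_{i=1}^N ℓ_i at θ, plus (1/N) ∑_{i=1}^N (trace of the Hessian of f_i at θ)/f_i(θ), equals (1/N) ∑_{i=1}^N ‖∇ℓ_i(θ)‖₂². In the paper's terminology: the augmented flatness w.r.t. the parameters equals the expected squared gradient norm of the per-sample cross-entropy losses over the finite training set. -/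
/-- The trace of the Hessian of `g : ℝ^p → ℝ` at `θ`, computed as the sum over the standard
basis directions of the second iterated derivative evaluated twice in that direction. -/
noncomputable def trHess {p : ℕ} (g : EuclideanSpace ℝ (Fin p) → ℝ)
    (θ : EuclideanSpace ℝ (Fin p)) : ℝ :=
  ∑ j, iteratedFDeriv ℝ 2 g θ ![EuclideanSpace.single j 1, EuclideanSpace.single j 1]

theorem aux_fderiv2 {p N : ℕ}
    (f : Fin N → EuclideanSpace ℝ (Fin p) → ℝ)
    (hf : ∀ i, ContDiff ℝ 2 (f i))
    (θ : EuclideanSpace ℝ (Fin p)) (hfθ : ∀ i, 0 < f i θ)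
    (ℓ : Fin N → EuclideanSpace ℝ (Fin p) → ℝ)
    (hℓ : ∀ i x, ℓ i x = -Real.log (f i x)) (c : ℝ) (v : EuclideanSpace ℝ (Fin p)) :
    fderiv ℝ (fderiv ℝ (fun x => c * ∑ i, ℓ i x)) θ v v =
      c * ∑ i, (-(f i θ)⁻¹ * fderiv ℝ (fderiv ℝ (f i)) θ v v + (fderiv ℝ (ℓ i) θ v) ^ 2) := by
  have hd : ∀ i x, HasFDerivAt (f i) (fderiv ℝ (f i) x) x := fun i x =>
    ((hf i).differentiable (by norm_num) x).hasFDerivAt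
  have hl : ∀ i x, 0 < f i x → HasFDerivAt (ℓ i) (-((f i x)⁻¹ • fderiv ℝ (f i) x)) x := by
    intro i x hx
    have : ℓ i = fun x => -Real.log (f i x) := funext (hℓ i)
    rw [this]
    exact ((hd i x).log hx.ne').neg
  have hev : ∀ᶠ x in nhds θ, ∀ i, 0 < f i x := by
    rw [Filter.eventually_all]
    intro i
    exact (hf i).continuous.continuousAt.eventually (lt_mem_nhds (hfθ i))
  have heq : fderiv ℝ (fun x => c * ∑ i, ℓ i x) =ᶠ[nhds θ]
      fun x => c • ∑ i, (-((f i x)⁻¹ • fderiv ℝ (f i) x)) := by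
    filter_upwards [hev] with x hx
    exact ((HasFDerivAt.fun_sum (fun i _ => hl i x (hx i))).const_mul c).fderiv
  have hdd : ∀ i, HasFDerivAt (fderiv ℝ (f i)) (fderiv ℝ (fderiv ℝ (f i)) θ) θ := fun i =>
    (((hf i).fderiv_right (m := 1) (by norm_num)).differentiable (by norm_num) θ).hasFDerivAt
  have hinv : ∀ i, HasFDerivAt (fun x => (f i x)⁻¹)
      ((-(f i θ ^ 2)⁻¹) • fderiv ℝ (f i) θ) θ := fun i =>
    (hasDerivAt_inv (hfθ i).ne').comp_hasFDerivAt θ (hd i θ)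
  rw [heq.fderiv_eq,
    ((HasFDerivAt.fun_sum (u := Finset.univ)
      (fun i _ => ((hinv i).fun_smul (hdd i)).fun_neg)).fun_const_smul c).fderiv]
  simp only [ContinuousLinearMap.smul_apply, ContinuousLinearMap.sum_apply, smul_eq_mul]
  congr 1
  refine Finset.sum_congr rfl fun i _ => ?_
  rw [(hl i θ (hfθ i)).fderiv]
  have := (hfθ i).ne'
  simp
  field_simp
  try ring

theorem aux_grad {p : ℕ} (g : EuclideanSpace ℝ (Fin p) → ℝ) (θ : EuclideanSpace ℝ (Fin p)) :
    ‖gradient g θ‖ ^ 2 = ∑ j, (fderiv ℝ g θ (EuclideanSpace.single j 1)) ^ 2 := by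
  rw [EuclideanSpace.real_norm_sq_eq]
  refine Finset.sum_congr rfl fun j _ => ?_
  have : inner ℝ (gradient g θ) (EuclideanSpace.single j 1)
      = fderiv ℝ g θ (EuclideanSpace.single j 1) := by
    simp [gradient, InnerProductSpace.toDual_symm_apply]
  rw [← this, EuclideanSpace.inner_single_right]
  simp

/-- For `N ≥ 1` twice continuously differentiable functions `f_i` positive
at `θ`, with per-sample losses `ℓ_i = -log f_i`, the augmented flatness
`tr ∇²((1/N) ∑ ℓ_i)(θ) + (1/N) ∑ tr(∇²f_i(θ))/f_i(θ)` equals the expected squared gradient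
norm `(1/N) ∑ ‖∇ℓ_i(θ)‖²`. -/
theorem stmt3 {p N : ℕ} (hN : 1 ≤ N)
    (f : Fin N → EuclideanSpace ℝ (Fin p) → ℝ)
    (hf : ∀ i, ContDiff ℝ 2 (f i))
    (θ : EuclideanSpace ℝ (Fin p)) (hfθ : ∀ i, 0 < f i θ)
    (ℓ : Fin N → EuclideanSpace ℝ (Fin p) → ℝ)
    (hℓ : ∀ i x, ℓ i x = -Real.log (f i x)) :
    trHess (fun x => (1 / N : ℝ) * ∑ i, ℓ i x) θ +
        (1 / N : ℝ) * ∑ i, trHess (f i) θ / f i θ =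
      (1 / N : ℝ) * ∑ i, ‖gradient (ℓ i) θ‖ ^ 2 := by
  simp only [trHess, iteratedFDeriv_two_apply, Matrix.cons_val_zero, Matrix.cons_val_one,
    aux_fderiv2 f hf θ hfθ ℓ hℓ, aux_grad]
  rw [← Finset.mul_sum, ← mul_add, Finset.sum_comm, ← Finset.sum_add_distrib]
  congr 1
  refine Finset.sum_congr rfl fun i _ => ?_
  rw [Finset.sum_add_distrib, ← Finset.mul_sum]
  ring
end

section
/- Let f : ℝ^p → ℝ be twice continuously differentiable and fix θ ∈ ℝ^p. For σ > 0 let μ_σ be the uniform probability measure on the cube [−√3·σ, +√3·σ]^p. Then (1/σ²)·( ∫ f(θ + δ) dμ_σ(δ) − f(θ) ) converges, as σ → 0⁺, to (1/2)·tr(∇²f(θ)), the half-trace of the Hessian of f at θ. In particular, the expected increase of f under independent uniform coordinate-wise perturbations of standard deviation σ equals (σ²/2)·tr(∇²f(θ)) + o(σ²). -/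
open MeasureTheory Finset Filter

theorem aux_taylor {E : Type*} [NormedAddCommGroup E] [NormedSpace ℝ E] (f : E → ℝ)
    (hf : ContDiff ℝ 2 f) (θ : E) (ε : ℝ) (hε : 0 < ε) :
    ∃ r > 0, ∀ h : E, ‖h‖ < r →
      |f (θ + h) - f θ - fderiv ℝ f θ h - (1 / 2) * fderiv ℝ (fderiv ℝ f) θ h h|
        ≤ ε * ‖h‖ ^ 2 := by
  have hd : Differentiable ℝ f := hf.differentiable (by norm_num)
  have h1 : ContDiff ℝ 1 (fderiv ℝ f) := hf.fderiv_right (by norm_num)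
  have hB : HasFDerivAt (fderiv ℝ f) (fderiv ℝ (fderiv ℝ f) θ) θ :=
    (h1.differentiable (by norm_num) θ).hasFDerivAt
  have hsym : IsSymmSndFDerivAt ℝ f θ := hf.contDiffAt.isSymmSndFDerivAt (by simp)
  set B := fderiv ℝ (fderiv ℝ f) θ with hBdef
  rw [hasFDerivAt_iff_isLittleO_nhds_zero] at hB
  have := hB.def hε
  obtain ⟨r, hr, hr'⟩ := Metric.eventually_nhds_iff.1 this
  refine ⟨r, hr, fun h hh => ?_⟩
  let g : E → ℝ := fun x => f (θ + x) - f θ - fderiv ℝ f θ x - (1 / 2) * B x x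
  have hg : ∀ x, HasFDerivAt g (fderiv ℝ f (θ + x) - fderiv ℝ f θ - B x) x := by
    intro x
    have e1 : HasFDerivAt (fun x => f (θ + x)) (fderiv ℝ f (θ + x)) x := by
      have := (hd (θ + x)).hasFDerivAt.comp x ((hasFDerivAt_id x).const_add θ)
      simpa [Function.comp_def] using this
    have e2 : HasFDerivAt (fun x => B x x) (B x + B.flip x) x := by
      have := B.hasFDerivAt (x := x) |>.clm_apply (hasFDerivAt_id x)
      simpa using this
    have e3 := ((e1.sub_const (f θ)).sub (fderiv ℝ f θ).hasFDerivAt).sub (e2.const_mul (1/2))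
    refine e3.congr_fderiv ?_
    ext y
    have := hsym x y
    simp only [sub_apply, add_apply,
      smul_apply, ContinuousLinearMap.flip_apply, smul_eq_mul]
    rw [← hBdef] at this
    rw [this]; ring
  have key := (convex_closedBall (0 : E) ‖h‖).norm_image_sub_le_of_norm_hasFDerivWithin_le
    (f := g) (C := ε * ‖h‖) (x := 0) (y := h)
    (fun x _ => (hg x).hasFDerivWithinAt) (by
      intro x hx
      have hx' : ‖x‖ ≤ ‖h‖ := by simpa using hx
      have := @hr' x (by simpa using lt_of_le_of_lt hx' hh)
      refine this.trans ?_
      gcongr) (by simp) (by simp)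
  have g0 : g 0 = 0 := by simp [g]
  rw [g0, sub_zero, sub_zero, Real.norm_eq_abs] at key
  calc _ ≤ _ := key
    _ = _ := by ring

theorem aux_int {p : ℕ} (m : Measure (Fin p → ℝ)) [IsFiniteMeasure m] (R : ℝ)
    (h : ∀ᵐ x ∂m, ‖x‖ ≤ R) (g : (Fin p → ℝ) → ℝ) (hg : Continuous g) : Integrable g m := by
  obtain ⟨C, hC⟩ := (isCompact_closedBall (0 : Fin p → ℝ) R).exists_bound_of_continuousOn
    hg.continuousOn
  refine Integrable.of_bound hg.aestronglyMeasurable C ?_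
  filter_upwards [h] with x hx
  exact hC x (by simpa using hx)

theorem aux_one (a : ℝ) (ha : 0 < a) (ν : Measure ℝ)
    (hν : ν = (volume (Set.Icc (-a) a))⁻¹ • volume.restrict (Set.Icc (-a) a)) :
    IsProbabilityMeasure ν ∧ (∀ᵐ x ∂ν, |x| ≤ a) ∧ ∫ x, x ∂ν = 0 ∧ ∫ x, x ^ 2 ∂ν = a ^ 2 / 3 := by
  have hv : volume (Set.Icc (-a) a) = ENNReal.ofReal (2 * a) := by
    rw [Real.volume_Icc]; congr 1; ring
  have hi : ∀ g : ℝ → ℝ, ∫ x, g x ∂ν = (2 * a)⁻¹ * ∫ x in (-a)..a, g x := by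
    intro g
    rw [hν, integral_smul_measure, hv, intervalIntegral.integral_of_le (by linarith),
      integral_Icc_eq_integral_Ioc, ENNReal.toReal_inv, ENNReal.toReal_ofReal (by positivity),
      smul_eq_mul]
  refine ⟨⟨?_⟩, ?_, ?_, ?_⟩
  · rw [hν, Measure.smul_apply, Measure.restrict_apply_univ, hv, smul_eq_mul]
    exact ENNReal.inv_mul_cancel (by simpa using ha) ENNReal.ofReal_ne_top
  · rw [hν]
    refine Measure.ae_smul_measure ?_ _
    filter_upwards [ae_restrict_mem measurableSet_Icc] with x hx
    exact abs_le.2 hx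
  · rw [hi, integral_id]; ring
  · rw [hi, integral_pow]; field_simp; norm_num; ring

theorem aux_pi {p : ℕ} (a : ℝ) (ha : 0 < a) (ν : Measure ℝ) [IsProbabilityMeasure ν]
    (hb : ∀ᵐ x ∂ν, |x| ≤ a) (h1 : ∫ x, x ∂ν = 0) (h2 : ∫ x, x ^ 2 ∂ν = a ^ 2 / 3) :
    (∀ᵐ x ∂(Measure.pi fun _ : Fin p => ν), ‖x‖ ≤ a) ∧
    (∀ i, ∫ x, x i ∂(Measure.pi fun _ : Fin p => ν) = 0) ∧
    (∀ i j, ∫ x, x i * x j ∂(Measure.pi fun _ : Fin p => ν) = if i = j then a ^ 2 / 3 else 0) := by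
  have he : ∀ i (g : ℝ → ℝ), Continuous g →
      ∫ x, g (x i) ∂(Measure.pi fun _ : Fin p => ν) = ∫ x, g x ∂ν := by
    intro i g hg
    have := measurePreserving_eval (fun _ : Fin p => ν) i
    conv_rhs => rw [← this.map_eq]
    rw [integral_map (measurable_pi_apply i).aemeasurable hg.aestronglyMeasurable]
  refine ⟨?_, fun i => (he i (fun x => x) continuous_id).trans h1, fun i j => ?_⟩
  · have : ∀ᵐ x ∂(Measure.pi fun _ : Fin p => ν), ∀ i, |x i| ≤ a := by
      rw [ae_all_iff]
      intro i
      exact (Measure.quasiMeasurePreserving_eval (fun _ : Fin p => ν) i).ae hb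
    filter_upwards [this] with x hx
    exact (pi_norm_le_iff_of_nonneg ha.le).2 hx
  · split_ifs with hij
    · subst hij
      rw [← h2, ← he i (fun x => x ^ 2) (by fun_prop)]
      simp only [sq]
    · have hI := ProbabilityTheory.iIndepFun_pi (μ := fun _ : Fin p => ν)
        (X := fun _ x => x) (fun _ => aemeasurable_id)
      rw [(hI.indepFun hij).integral_fun_mul_eq_mul_integral
        (measurable_pi_apply i).aestronglyMeasurable (measurable_pi_apply j).aestronglyMeasurable,
        (he i (fun x => x) continuous_id).trans h1, zero_mul]

/-- For `f : ℝ^p → ℝ` twice continuously differentiable and `μ_σ` the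
uniform probability measure on the cube `[−√3·σ, +√3·σ]^p`, the quantity
`(1/σ²)(∫ f(θ+δ) dμ_σ(δ) − f(θ))` converges, as `σ → 0⁺`, to half the trace of the Hessian
of `f` at `θ`. -/
theorem stmt11 {p : ℕ} (f : (Fin p → ℝ) → ℝ) (hf : ContDiff ℝ 2 f)
    (θ : Fin p → ℝ)
    (μ : ℝ → Measure (Fin p → ℝ))
    (hμ : ∀ s : ℝ, μ s = Measure.pi fun _ =>
      (volume (Set.Icc (-(Real.sqrt 3 * s)) (Real.sqrt 3 * s)))⁻¹ •
        volume.restrict (Set.Icc (-(Real.sqrt 3 * s)) (Real.sqrt 3 * s))) :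
    Tendsto (fun s : ℝ => (1 / s ^ 2) * ((∫ δ, f (θ + δ) ∂(μ s)) - f θ))
      (nhdsWithin 0 (Set.Ioi 0))
      (nhds ((1 / 2 : ℝ) *
        ∑ i, iteratedFDeriv ℝ 2 f θ ![Pi.single i 1, Pi.single i 1])) := by
  have h3 : (0 : ℝ) < Real.sqrt 3 := by positivity
  set A := fderiv ℝ f θ with hA
  set B := fderiv ℝ (fderiv ℝ f) θ with hB
  have hT : ∑ i, iteratedFDeriv ℝ 2 f θ ![Pi.single i 1, Pi.single i 1]
      = ∑ i, B (Pi.single i 1) (Pi.single i 1) := by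
    simp [iteratedFDeriv_two_apply, hB]
  rw [hT]
  have hAe : ∀ x : Fin p → ℝ, A x = ∑ i, x i * A (Pi.single i 1) := by
    intro x
    conv_lhs => rw [pi_eq_sum_univ' x]
    simp [map_sum]
  have hBe : ∀ x : Fin p → ℝ,
      B x x = ∑ i, ∑ j, (x i * x j) * B (Pi.single i 1) (Pi.single j 1) := by
    intro x
    conv_lhs => rw [pi_eq_sum_univ' x]
    simp only [map_sum, _root_.sum_apply, map_smul, smul_apply, smul_eq_mul, Finset.mul_sum]
    rw [Finset.sum_comm]
    refine Finset.sum_congr rfl fun i _ => Finset.sum_congr rfl fun j _ => ?_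
    ring
  rw [Metric.tendsto_nhdsWithin_nhds]
  intro ε hε
  obtain ⟨r, hr, hT⟩ := aux_taylor f hf θ (ε / 6) (by positivity)
  refine ⟨r / Real.sqrt 3, by positivity, fun {s} hs hsd => ?_⟩
  have hs : 0 < s := hs
  set a := Real.sqrt 3 * s with ha
  have hapos : 0 < a := by positivity
  have har : a < r := by
    rw [dist_zero_right, Real.norm_eq_abs, abs_of_pos hs, lt_div_iff₀ h3] at hsd
    linarith
  have ha2 : a ^ 2 = 3 * s ^ 2 := by rw [ha, mul_pow, Real.sq_sqrt (by norm_num)]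
  obtain ⟨hP, hb, m1, m2⟩ := aux_one a hapos _ rfl
  obtain ⟨hn, M1, M2⟩ := aux_pi (p := p) a hapos _ hb m1 m2
  rw [← hμ s] at hn M1 M2
  have hPμ : IsProbabilityMeasure (μ s) := by rw [hμ s]; infer_instance
  have I := aux_int (μ s) a hn
  have hfc : Continuous f := hf.continuous
  have IA : ∫ x, A x ∂(μ s) = 0 := by
    rw [funext hAe]
    rw [integral_finsetSum _ (fun i _ => I _ (by fun_prop))]
    simp [integral_mul_const, M1]
  have IB : ∫ x, B x x ∂(μ s) = s ^ 2 * ∑ i, B (Pi.single i 1) (Pi.single i 1) := by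
    rw [funext hBe]
    rw [integral_finsetSum _ (fun i _ => I _ (by fun_prop)), Finset.mul_sum]
    refine Finset.sum_congr rfl fun i _ => ?_
    rw [integral_finsetSum _ (fun i _ => I _ (by fun_prop))]
    simp [integral_mul_const, M2, ha2]
  have hrem : |∫ x, (f (θ + x) - f θ - A x - (1 / 2) * B x x) ∂(μ s)| ≤ ε / 6 * a ^ 2 := by
    have := norm_integral_le_of_norm_le_const (μ := μ s)
      (f := fun x => f (θ + x) - f θ - A x - (1 / 2) * B x x) (C := ε / 6 * a ^ 2) (by
        filter_upwards [hn] with x hx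
        refine (hT x (hx.trans_lt har)).trans ?_
        gcongr)
    simpa using this
  rw [integral_sub (I _ (by fun_prop)) (I _ (by fun_prop)),
    integral_sub (I _ (by fun_prop)) (I _ (by fun_prop)),
    integral_sub (I _ (by fun_prop)) (I _ (by fun_prop)), integral_const_mul, IA, IB] at hrem
  simp only [integral_const, probReal_univ, one_smul, sub_zero] at hrem
  rw [Real.dist_eq]
  set T := ∑ i, B (Pi.single i 1) (Pi.single i 1)
  set J := ∫ δ, f (θ + δ) ∂(μ s)
  have e : 1 / s ^ 2 * (J - f θ) - 1 / 2 * T = (J - f θ - 1 / 2 * (s ^ 2 * T)) / s ^ 2 := by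
    field_simp
  rw [e, abs_div, abs_of_pos (by positivity : 0 < s ^ 2), div_lt_iff₀ (by positivity)]
  refine hrem.trans_lt ?_
  rw [ha2]
  have : 0 < ε * s ^ 2 := by positivity
  linarith
end

section
/- Let σ : ℝ → ℝ be a jumping activation function. Define the zero-assigned derivative d_σ : ℝ → ℝ by d_σ(x) = σ'(x) if σ is differentiable at x and d_σ(x) = 0 otherwise. Then for every x ∈ ℝ, σ(x) = 0 if and only if d_σ(x) = 0. Consequently, for any real matrix P, the activation matrix A with entries σ(P_{i,j}) and the derivative matrix D with entries d_σ(P_{i,j}) satisfy ‖A‖₀ = ‖D‖₀, i.e. activation sparsity equals derivative sparsity. -/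
open Finset

/-- A jumping activation function: zero on `(-∞, 0]`, positive on `(0, ∞)`, continuous,
twice continuously differentiable on `(-∞, 0)` and on `(0, ∞)`, with `|σ'(x)| ≥ 1` for
`x > 0` and `σ'(x) = 0` for `x < 0`. -/
def IsJumping (σ : ℝ → ℝ) : Prop :=
  (∀ x ≤ 0, σ x = 0) ∧ (∀ x > 0, 0 < σ x) ∧ Continuous σ ∧
    ContDiffOn ℝ 2 σ (Set.Iio 0) ∧ ContDiffOn ℝ 2 σ (Set.Ioi 0) ∧
    (∀ x > 0, 1 ≤ |deriv σ x|) ∧ (∀ x < 0, deriv σ x = 0)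

open Classical in
/-- The zero-assigned derivative of `σ`: `σ'(x)` where `σ` is differentiable, `0` elsewhere. -/
noncomputable def zeroAssignedDeriv (σ : ℝ → ℝ) : ℝ → ℝ := fun x =>
  if DifferentiableAt ℝ σ x then deriv σ x else 0

/-- For a jumping activation `σ` with zero-assigned derivative `d_σ`,
`σ(x) = 0 ↔ d_σ(x) = 0` for every `x`; consequently, for any matrix `P`, the activation
matrix `σ(P)` and the derivative matrix `d_σ(P)` have the same number of nonzero entries
(activation sparsity equals derivative sparsity). -/
theorem stmt12 (σ : ℝ → ℝ) (hσ : IsJumping σ) :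
    (∀ x : ℝ, σ x = 0 ↔ zeroAssignedDeriv σ x = 0) ∧
      ∀ (k m : ℕ) (P : Fin k → Fin m → ℝ),
        ((Finset.univ : Finset (Fin k × Fin m)).filter
            fun q => σ (P q.1 q.2) ≠ 0).card =
          ((Finset.univ : Finset (Fin k × Fin m)).filter
            fun q => zeroAssignedDeriv σ (P q.1 q.2) ≠ 0).card := by
  obtain ⟨h0, hp, -, -, -, hd, -⟩ := hσ
  have hz : ∀ x, zeroAssignedDeriv σ x = deriv σ x := by
    intro x
    unfold zeroAssignedDeriv
    split_ifs with h
    · rfl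
    · exact (deriv_zero_of_not_differentiableAt h).symm
  have key : ∀ x : ℝ, σ x = 0 ↔ zeroAssignedDeriv σ x = 0 := by
    intro x
    rw [hz]
    rcases le_or_gt x 0 with hx | hx
    · refine iff_of_true (h0 x hx) (IsLocalMin.deriv_eq_zero ?_)
      refine Filter.Eventually.of_forall fun y => ?_
      rw [h0 x hx]
      rcases le_or_gt y 0 with hy | hy
      · exact (h0 y hy).ge
      · exact (hp y hy).le
    · refine iff_of_false (hp x hx).ne' fun h => ?_
      have := hd x hx
      rw [h, abs_zero] at this
      linarith
  refine ⟨key, fun k m P => ?_⟩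
  congr 1
  ext q
  simp [key]
end
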